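/- Let W be a d-dimensional rational linear subspace of ℝⁿ, let W' be its orthogonal complement with respect to the standard inner product (which is again rational), and let {q₁,…,q_{n−d}} be a ℤ-basis of the free abelian group W' ∩ ℤⁿ. Then the congruence E(W) on 𝕋[x₁^±,…,xₙ^±]_fcn is generated by the finite set S = {(x^{qᵢ}-monomial function, constant function 0) : i = 1,…,n−d}, where the x^{qᵢ}-monomial function is p ↦ qᵢ·p; that is, E(W) = ⟨S⟩. In particular, E(W) is finitely generated. -/

import Mathlib

/-!
Functions in the congruence `E` generated by the `x^{qᵢ}` agree on `W`, because `𝐄(W)` is itself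
a congruence containing the generators (`Econg_isTropCongruence`).

For the other inclusion let `L = W' ∩ ℤⁿ` (`perpLattice`). This sublattice is saturated, so
`ℤⁿ / L` is free and there is a `ℤ`-linear `π : ℤⁿ → ℤⁿ` that kills `L` and satisfies
`u - π u ∈ L` (`exists_retraction`). Since `L` is generated by the `qᵢ`, every monomial `x^u` is
congruent to `x^{π u}` (`mono_congr`), and so every tropical Laurent polynomial function `f` is
congruent to the function obtained by applying `π` to its exponents. That function is `f ∘ πᵗ`,
where `πᵗ` is the real transpose of `π`. The transpose maps `ℝⁿ` into `W`: its image is spanned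
by integer vectors orthogonal to `L`, and these lie in `W` because `W` is rational
(`mem_span_of_orthogonal`). Hence if `f` and `g` agree on `W`, then `f ∘ πᵗ = g ∘ πᵗ`, and
`f ~ f ∘ πᵗ = g ∘ πᵗ ~ g`.
-/

noncomputable section

/-- The tropical semifield `𝕋 = ℝ ∪ {-∞}`, with tropical addition `⊔` (max) and
tropical multiplication `+`. -/
abbrev Trop : Type := WithBot ℝ

/-- `𝕋`-valued functions on `ℝⁿ`. -/
abbrev TropFn (n : ℕ) : Type := (Fin n → ℝ) → Trop

/-- `f` is a tropical Laurent polynomial function: it is the pointwise maximum of finitely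
many affine terms `p ↦ c + u·p` with `c ∈ ℝ` and `u ∈ ℤⁿ` (terms with coefficient `-∞` are
ignored, so we may take all coefficients real; the empty maximum is the constant `-∞`). -/
def IsTropFcn {n : ℕ} (f : TropFn n) : Prop :=
  ∃ A : Finset (ℝ × (Fin n → ℤ)),
    ∀ p, f p = A.sup fun t => ((t.1 + ∑ i, (t.2 i : ℝ) * p i : ℝ) : Trop)

/-- A congruence on the semiring `𝕋[x₁^±,…,xₙ^±]_fcn` of tropical Laurent polynomial
functions: an equivalence relation on the set of tropical Laurent polynomial functions that
is compatible with the semiring addition (pointwise `⊔`) and multiplication (pointwise `+`). -/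
structure IsTropCongruence (n : ℕ) (E : Set (TropFn n × TropFn n)) : Prop where
  mem_left : ∀ ⦃f g : TropFn n⦄, (f, g) ∈ E → IsTropFcn f
  mem_right : ∀ ⦃f g : TropFn n⦄, (f, g) ∈ E → IsTropFcn g
  refl : ∀ ⦃f : TropFn n⦄, IsTropFcn f → (f, f) ∈ E
  symm : ∀ ⦃f g : TropFn n⦄, (f, g) ∈ E → (g, f) ∈ E
  trans : ∀ ⦃f g h : TropFn n⦄, (f, g) ∈ E → (g, h) ∈ E → (f, h) ∈ E
  add_compat : ∀ ⦃f₁ g₁ f₂ g₂ : TropFn n⦄,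
    (f₁, g₁) ∈ E → (f₂, g₂) ∈ E → (f₁ ⊔ f₂, g₁ ⊔ g₂) ∈ E
  mul_compat : ∀ ⦃f₁ g₁ f₂ g₂ : TropFn n⦄,
    (f₁, g₁) ∈ E → (f₂, g₂) ∈ E → (f₁ + f₂, g₁ + g₂) ∈ E

/-- `⟨S⟩`: the smallest congruence containing `S`. -/
def congGen (n : ℕ) (S : Set (TropFn n × TropFn n)) : Set (TropFn n × TropFn n) :=
  ⋂₀ {E | IsTropCongruence n E ∧ S ⊆ E}

/-- `𝐄(Z)`: the congruence of pairs of tropical Laurent polynomial functions agreeing on `Z`. -/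
def Econg (n : ℕ) (Z : Set (Fin n → ℝ)) : Set (TropFn n × TropFn n) :=
  {fg | IsTropFcn fg.1 ∧ IsTropFcn fg.2 ∧ ∀ p ∈ Z, fg.1 p = fg.2 p}

/-! ### Monomials and tropical Laurent polynomial functions -/

/-- The tropical monomial function `p ↦ c + u·p`. -/
def mono {n : ℕ} (c : ℝ) (u : Fin n → ℤ) : TropFn n :=
  fun p => ((c + ∑ i, (u i : ℝ) * p i : ℝ) : Trop)

/-- The tropical Laurent polynomial function with the given finite set of terms
(coefficient, exponent). -/
def polyFn {n : ℕ} (A : Finset (ℝ × (Fin n → ℤ))) : TropFn n :=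
  A.sup fun t => mono t.1 t.2

lemma polyFn_apply {n : ℕ} (A : Finset (ℝ × (Fin n → ℤ))) (p : Fin n → ℝ) :
    polyFn A p = A.sup fun t => ((t.1 + ∑ i, (t.2 i : ℝ) * p i : ℝ) : Trop) := by
  simp [polyFn, mono, Finset.sup_apply]

lemma isTropFcn_iff {n : ℕ} {f : TropFn n} : IsTropFcn f ↔ ∃ A, f = polyFn A := by
  constructor
  · rintro ⟨A, hA⟩
    exact ⟨A, funext fun p => by rw [hA, polyFn_apply]⟩
  · rintro ⟨A, rfl⟩
    exact ⟨A, polyFn_apply A⟩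

lemma isTropFcn_mono {n : ℕ} (c : ℝ) (u : Fin n → ℤ) : IsTropFcn (mono c u) :=
  isTropFcn_iff.2 ⟨{(c, u)}, by simp [polyFn]⟩

lemma isTropFcn_bot {n : ℕ} : IsTropFcn (⊥ : TropFn n) :=
  isTropFcn_iff.2 ⟨∅, by simp [polyFn]⟩

lemma IsTropFcn.sup {n : ℕ} {f g : TropFn n} (hf : IsTropFcn f) (hg : IsTropFcn g) :
    IsTropFcn (f ⊔ g) := by
  classical
  obtain ⟨A, rfl⟩ := isTropFcn_iff.1 hf
  obtain ⟨B, rfl⟩ := isTropFcn_iff.1 hg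
  exact isTropFcn_iff.2 ⟨A ∪ B, by simp [polyFn, Finset.sup_union]⟩

lemma mono_add {n : ℕ} (c d : ℝ) (u v : Fin n → ℤ) :
    mono c u + mono d v = mono (c + d) (u + v) := by
  funext p
  simp only [mono, Pi.add_apply, ← WithBot.coe_add]
  congr 1
  push_cast
  simp only [add_mul, Finset.sum_add_distrib]
  ring

lemma mono_zero {n : ℕ} : mono 0 (0 : Fin n → ℤ) = fun _ => (0 : Trop) := by
  funext p
  simp [mono]

lemma sup_add_fn {n : ℕ} (f g h : TropFn n) : (f ⊔ g) + h = (f + h) ⊔ (g + h) :=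
  funext fun p => (max_add_add_right (f p) (g p) (h p)).symm

lemma polyFn_insert {n : ℕ} [DecidableEq (ℝ × (Fin n → ℤ))] (t : ℝ × (Fin n → ℤ))
    (A : Finset (ℝ × (Fin n → ℤ))) : polyFn (insert t A) = mono t.1 t.2 ⊔ polyFn A := by
  simp [polyFn]

lemma IsTropFcn.add {n : ℕ} {f g : TropFn n} (hf : IsTropFcn f) (hg : IsTropFcn g) :
    IsTropFcn (f + g) := by
  classical
  obtain ⟨A, rfl⟩ := isTropFcn_iff.1 hf
  obtain ⟨B, rfl⟩ := isTropFcn_iff.1 hg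
  have bot_add_fn : ∀ h : TropFn n, (⊥ : TropFn n) + h = ⊥ := fun h =>
    funext fun p => WithBot.bot_add (h p)
  induction A using Finset.induction_on with
  | empty =>
    have : polyFn (∅ : Finset (ℝ × (Fin n → ℤ))) = ⊥ := by simp [polyFn]
    rw [this, bot_add_fn]
    exact isTropFcn_bot
  | insert t A _ ih =>
    rw [polyFn_insert, sup_add_fn]
    refine IsTropFcn.sup ?_ (ih (isTropFcn_iff.2 ⟨A, rfl⟩))
    clear ih
    induction B using Finset.induction_on with
    | empty =>
      have : polyFn (∅ : Finset (ℝ × (Fin n → ℤ))) = ⊥ := by simp [polyFn]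
      rw [this, add_comm, bot_add_fn]
      exact isTropFcn_bot
    | insert s B _ ih =>
      rw [polyFn_insert, add_comm, sup_add_fn, mono_add, add_comm (polyFn B)]
      exact (isTropFcn_mono _ _).sup (ih (isTropFcn_iff.2 ⟨B, rfl⟩))

lemma Econg_isTropCongruence (n : ℕ) (Z : Set (Fin n → ℝ)) :
    IsTropCongruence n (Econg n Z) where
  mem_left _ _ h := h.1
  mem_right _ _ h := h.2.1
  refl _ h := ⟨h, h, fun _ _ => rfl⟩
  symm _ _ h := ⟨h.2.1, h.1, fun p hp => (h.2.2 p hp).symm⟩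
  trans _ _ _ h k := ⟨h.1, k.2.1, fun p hp => (h.2.2 p hp).trans (k.2.2 p hp)⟩
  add_compat _ _ _ _ h k := ⟨h.1.sup k.1, h.2.1.sup k.2.1, fun p hp =>
    congrArg₂ (· ⊔ ·) (h.2.2 p hp) (k.2.2 p hp)⟩
  mul_compat _ _ _ _ h k := ⟨h.1.add k.1, h.2.1.add k.2.1, fun p hp =>
    congrArg₂ (· + ·) (h.2.2 p hp) (k.2.2 p hp)⟩

/-! ### Congruences between monomials -/

/-- The exponents `v` whose monomial `x^v` is identified with `1` (the constant function `0`)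
by the congruence `E`. -/
def unitExponents {n : ℕ} {E : Set (TropFn n × TropFn n)} (hE : IsTropCongruence n E) :
    AddSubgroup (Fin n → ℤ) where
  carrier := {v | (mono 0 v, mono 0 0) ∈ E}
  zero_mem' := hE.refl (isTropFcn_mono _ _)
  add_mem' {u v} hu hv := by
    have := hE.mul_compat hu hv
    simpa [mono_add] using this
  neg_mem' {v} hv := by
    have := hE.mul_compat hv (hE.refl (isTropFcn_mono 0 (-v)))
    simp only [mono_add, add_zero, add_neg_cancel, zero_add] at this
    exact hE.symm this

lemma mono_congr {n : ℕ} {E : Set (TropFn n × TropFn n)} (hE : IsTropCongruence n E)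
    (c : ℝ) {u v : Fin n → ℤ} (h : u - v ∈ unitExponents hE) : (mono c u, mono c v) ∈ E := by
  have := hE.mul_compat h (hE.refl (isTropFcn_mono c v))
  simpa [mono_add] using this

lemma polyFn_congr {n : ℕ} {E : Set (TropFn n × TropFn n)} (hE : IsTropCongruence n E)
    (π : (Fin n → ℤ) → (Fin n → ℤ)) (hπ : ∀ u, u - π u ∈ unitExponents hE)
    (A : Finset (ℝ × (Fin n → ℤ))) :
    (polyFn A, A.sup fun t => mono t.1 (π t.2)) ∈ E := by
  classical
  induction A using Finset.induction_on with
  | empty => simpa [polyFn] using hE.refl isTropFcn_bot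
  | insert t A _ ih =>
    rw [polyFn_insert, Finset.sup_insert]
    exact hE.add_compat (mono_congr hE _ (hπ _)) ih

/-! ### The lattice orthogonal to a rational subspace -/

/-- The lattice `W^⊥ ∩ ℤⁿ` of integer vectors orthogonal to `W`. -/
def perpLattice {n : ℕ} (W : Submodule ℝ (Fin n → ℝ)) : Submodule ℤ (Fin n → ℤ) where
  carrier := {v | ∀ w ∈ W, ∑ i, (v i : ℝ) * w i = 0}
  zero_mem' := by simp
  add_mem' {u v} hu hv w hw := by
    simp [add_mul, Finset.sum_add_distrib, hu w hw, hv w hw]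
  smul_mem' k v hv w hw := by
    simp [mul_assoc, ← Finset.mul_sum, hv w hw]

/-- As `W^⊥ ∩ ℤⁿ` is saturated, the quotient of `ℤⁿ` by it is free; `π` is the quotient map
followed by a section. -/
lemma exists_retraction {n : ℕ} (W : Submodule ℝ (Fin n → ℝ)) :
    ∃ π : (Fin n → ℤ) →ₗ[ℤ] (Fin n → ℤ),
      (∀ u ∈ perpLattice W, π u = 0) ∧ ∀ u, u - π u ∈ perpLattice W := by
  have : Module.IsTorsionFree ℤ ((Fin n → ℤ) ⧸ perpLattice W) := by
    refine Module.IsTorsionFree.of_smul_eq_zero fun k m h => ?_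
    obtain ⟨v, rfl⟩ := Submodule.Quotient.mk_surjective _ m
    rw [← Submodule.Quotient.mk_smul, Submodule.Quotient.mk_eq_zero] at h
    rw [Submodule.Quotient.mk_eq_zero]
    by_cases hk : k = 0
    · exact Or.inl hk
    · refine Or.inr fun w hw => ?_
      have := h w hw
      simp only [Pi.smul_apply, smul_eq_mul, Int.cast_mul, mul_assoc, ← Finset.mul_sum] at this
      exact (mul_eq_zero.1 this).resolve_left (by exact_mod_cast hk)
  obtain ⟨s, hs⟩ := Module.projective_lifting_property (perpLattice W).mkQ LinearMap.id
    (Submodule.mkQ_surjective _)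
  refine ⟨s ∘ₗ (perpLattice W).mkQ, fun u hu => ?_, fun u => ?_⟩
  · have : (perpLattice W).mkQ u = 0 := by simpa using hu
    rw [LinearMap.comp_apply, this, map_zero]
  · rw [← Submodule.Quotient.mk_eq_zero, Submodule.Quotient.mk_sub, sub_eq_zero]
    exact (LinearMap.congr_fun hs ((perpLattice W).mkQ u)).symm

/-- An integer vector orthogonal to every integer vector orthogonal to `s` lies in the real
span of `s`. It lies already in the rational span: a rational functional separating it from `s`
would, after clearing denominators, give an integer vector contradicting the hypothesis. -/
lemma mem_span_of_orthogonal {n : ℕ} (s : Set (Fin n → ℤ)) (z : Fin n → ℤ)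
    (hz : ∀ u : Fin n → ℤ, (∀ v ∈ s, ∑ i, u i * v i = 0) → ∑ i, u i * z i = 0) :
    (fun i => (z i : ℝ)) ∈
      Submodule.span ℝ ((fun u : Fin n → ℤ => fun i => (u i : ℝ)) '' s) := by
  have key : (fun i => (z i : ℚ)) ∈
      Submodule.span ℚ ((fun u : Fin n → ℤ => fun i => (u i : ℚ)) '' s) := by
    by_contra hcon
    obtain ⟨φ, hφz, hφ⟩ := Submodule.exists_le_ker_of_notMem hcon
    obtain ⟨b, hb⟩ := IsLocalization.exist_integer_multiples_of_finite (nonZeroDivisors ℤ)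
      (fun i => φ (Pi.single i 1))
    choose u hu using hb
    have hφu : ∀ v : Fin n → ℤ,
        ((∑ i, u i * v i : ℤ) : ℚ) = ((b : ℤ) : ℚ) * φ (fun i => (v i : ℚ)) := by
      intro v
      rw [LinearMap.pi_apply_eq_sum_univ φ, Finset.mul_sum]
      push_cast
      refine Finset.sum_congr rfl fun i _ => ?_
      have h := hu i
      have e : (fun j => if i = j then (1 : ℚ) else 0) = Pi.single i 1 := by
        funext j
        simp [Pi.single_apply, eq_comm]
      simp only [algebraMap_int_eq, eq_intCast, zsmul_eq_mul] at h
      rw [h, e, smul_eq_mul]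
      ring
    have hb0 : ((b : ℤ) : ℚ) ≠ 0 := by exact_mod_cast nonZeroDivisors.coe_ne_zero b
    have h0 := hz u fun v hv => by
      have h := hφu v
      have : φ (fun i => (v i : ℚ)) = 0 := hφ (Submodule.subset_span ⟨v, hv, rfl⟩)
      rw [this, mul_zero] at h
      exact_mod_cast h
    have h := hφu z
    rw [h0, Int.cast_zero] at h
    exact hφz ((mul_eq_zero.1 h.symm).resolve_left hb0)
  -- Extend scalars along the coordinatewise embedding `ℚⁿ → ℝⁿ`.
  let ι : (Fin n → ℚ) →ₗ[ℚ] (Fin n → ℝ) := (Algebra.linearMap ℚ ℝ).compLeft (Fin n)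
  have h := Submodule.mem_map_of_mem (f := ι) key
  rw [Submodule.map_span, Set.image_image] at h
  have hmem := Submodule.span_le_restrictScalars ℚ ℝ _ h
  simpa [ι, Function.comp_def, LinearMap.compLeft] using hmem

/-- The real transpose of a `ℤ`-linear endomorphism of `ℤⁿ`, for the standard pairing. -/
def transposeFn {n : ℕ} (π : (Fin n → ℤ) →ₗ[ℤ] (Fin n → ℤ)) (p : Fin n → ℝ) : Fin n → ℝ :=
  ∑ i, p i • fun j => ((π (Pi.single j 1) i : ℤ) : ℝ)

lemma apply_eq_sum_single {n : ℕ} (π : (Fin n → ℤ) →ₗ[ℤ] (Fin n → ℤ)) (u : Fin n → ℤ)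
    (i : Fin n) : π u i = ∑ j, u j * π (Pi.single j 1) i := by
  rw [LinearMap.pi_apply_eq_sum_univ π u, Finset.sum_apply]
  refine Finset.sum_congr rfl fun j _ => ?_
  have e : (fun k => if j = k then (1 : ℤ) else 0) = Pi.single j 1 := by
    funext k
    simp [Pi.single_apply, eq_comm]
  rw [e, Pi.smul_apply, smul_eq_mul]

lemma mono_map {n : ℕ} (π : (Fin n → ℤ) →ₗ[ℤ] (Fin n → ℤ)) (c : ℝ) (u : Fin n → ℤ)
    (p : Fin n → ℝ) : mono c (π u) p = mono c u (transposeFn π p) := by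
  simp only [mono, transposeFn]
  congr 2
  simp only [apply_eq_sum_single π u, Finset.sum_apply, Pi.smul_apply, smul_eq_mul,
    Int.cast_sum, Int.cast_mul, Finset.sum_mul, Finset.mul_sum]
  rw [Finset.sum_comm]
  exact Finset.sum_congr rfl fun j _ => Finset.sum_congr rfl fun i _ => by ring

lemma transposeFn_mem {n : ℕ} {W : Submodule ℝ (Fin n → ℝ)} {s : Set (Fin n → ℤ)}
    (hs : W = Submodule.span ℝ ((fun u : Fin n → ℤ => fun i => (u i : ℝ)) '' s))
    {π : (Fin n → ℤ) →ₗ[ℤ] (Fin n → ℤ)} (hπ : ∀ u ∈ perpLattice W, π u = 0)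
    (p : Fin n → ℝ) : transposeFn π p ∈ W := by
  refine Submodule.sum_mem _ fun i _ => Submodule.smul_mem _ _ ?_
  rw [hs]
  refine mem_span_of_orthogonal s (fun j => π (Pi.single j 1) i) fun u hu => ?_
  rw [← apply_eq_sum_single, hπ u, Pi.zero_apply]
  -- Orthogonality to the spanning set `s` gives orthogonality to `W`.
  intro w hw
  rw [hs] at hw
  induction hw using Submodule.span_induction with
  | mem x hx =>
    obtain ⟨v, hv, rfl⟩ := hx
    beta_reduce
    exact_mod_cast hu v hv
  | zero => simp
  | add x y _ _ hx hy => simp [mul_add, Finset.sum_add_distrib, hx, hy]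
  | smul a x _ hx => simp [mul_left_comm _ a, ← Finset.mul_sum, hx]

/-! ### Generators of the congruence of a rational subspace -/

/-- Let `W ⊆ ℝⁿ` be a `d`-dimensional rational linear subspace, `W'` its
orthogonal complement, and `q₁,…,q_{n-d}` a `ℤ`-basis of `W' ∩ ℤⁿ`.  Then
`𝐄(W) = ⟨(x^{qᵢ}, 0) : i = 1,…,n-d⟩`; in particular `𝐄(W)` is finitely generated. -/
theorem stmt13 (n d : ℕ) (hd : d ≤ n)
    (W W' : Submodule ℝ (Fin n → ℝ))
    (hrat : ∃ s : Set (Fin n → ℤ),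
      W = Submodule.span ℝ ((fun u : Fin n → ℤ => fun i => (u i : ℝ)) '' s))
    (hdim : Module.finrank ℝ W = d)
    (hW' : ∀ v : Fin n → ℝ, v ∈ W' ↔ ∀ w ∈ W, ∑ i, v i * w i = 0)
    (q : Fin (n - d) → (Fin n → ℤ))
    (hqW' : ∀ i, (fun j => (q i j : ℝ)) ∈ W')
    (hbasis : ∀ v : Fin n → ℤ, (fun j => (v j : ℝ)) ∈ W' →
      ∃! c : Fin (n - d) → ℤ, v = ∑ i, c i • q i) :
    Econg n (W : Set (Fin n → ℝ)) =
      congGen n (Set.range fun i : Fin (n - d) =>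
        ((fun p : Fin n → ℝ => ((∑ j, (q i j : ℝ) * p j : ℝ) : Trop)),
         (fun _ : Fin n → ℝ => (0 : Trop)))) := by
  obtain ⟨s, hs⟩ := hrat
  have hgen : ∀ i, (fun p : Fin n → ℝ => ((∑ j, (q i j : ℝ) * p j : ℝ) : Trop)) =
      mono 0 (q i) := fun i => by
    funext p
    simp [mono]
  simp only [hgen, ← mono_zero]
  apply Set.Subset.antisymm
  · rintro ⟨f, g⟩ ⟨hf, hg, hfg⟩ E ⟨hE, hSE⟩
    obtain ⟨A, rfl⟩ := isTropFcn_iff.1 hf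
    obtain ⟨B, rfl⟩ := isTropFcn_iff.1 hg
    obtain ⟨π, hπ0, hπ⟩ := exists_retraction W
    have hL : ∀ v ∈ perpLattice W, v ∈ unitExponents hE := by
      intro v hv
      obtain ⟨c, hc, -⟩ := hbasis v ((hW' _).2 hv)
      rw [hc]
      exact sum_mem fun i _ => zsmul_mem (show q i ∈ unitExponents hE from hSE ⟨i, rfl⟩) _
    have hcomp : ∀ C : Finset (ℝ × (Fin n → ℤ)),
        (C.sup fun t => mono t.1 (π t.2)) = fun p => polyFn C (transposeFn π p) := by
      intro C
      funext p
      simp only [polyFn, Finset.sup_apply, mono_map]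
    have hA := polyFn_congr hE π (fun u => hL _ (hπ u)) A
    have hB := polyFn_congr hE π (fun u => hL _ (hπ u)) B
    have hAB : (A.sup fun t => mono t.1 (π t.2)) = B.sup fun t => mono t.1 (π t.2) := by
      rw [hcomp, hcomp]
      exact funext fun p => hfg _ (transposeFn_mem hs hπ0 p)
    rw [hAB] at hA
    exact hE.trans hA (hE.symm hB)
  · refine Set.sInter_subset_of_mem ⟨Econg_isTropCongruence n _, ?_⟩
    rintro _ ⟨i, rfl⟩
    refine ⟨isTropFcn_mono _ _, isTropFcn_mono _ _, fun p hp => ?_⟩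
    have := (hW' _).1 (hqW' i) p hp
    simp [mono, this]
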